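/- Let n ≥ 1, let x ∈ (0,1), and let ρ₁, ρ₂ be density matrices (n×n complex positive semidefinite matrices of trace 1), and set ρ_Av := x·ρ₁ + (1−x)·ρ₂. Then Tr[ (x·√ρ₁ + (1−x)·√ρ₂) · √ρ_Av ] ≤ 1; consequently −2·log( Tr[ (x·√ρ₁ + (1−x)·√ρ₂) · √ρ_Av ] ) ≥ 0. -/

import Mathlib

open Matrix ComplexOrder

/-- Apply a real function to a Hermitian matrix via the spectral decomposition
`A = U D U*`: the result is `U (f(D)) U*` where `f` acts on the diagonal. -/
noncomputable def mfun {m : Type*} [Fintype m] [DecidableEq m]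
    (f : ℝ → ℝ) (A : Matrix m m ℂ) : Matrix m m ℂ :=
  if hA : A.IsHermitian then hA.cfc f else 0

/-- Matrix logarithm via spectral decomposition, with the convention `log 0 = 0`
(note `Real.log 0 = 0`). -/
noncomputable def matLog {m : Type*} [Fintype m] [DecidableEq m]
    (A : Matrix m m ℂ) : Matrix m m ℂ :=
  mfun Real.log A

/-- The positive semidefinite square root of a positive semidefinite matrix,
via spectral decomposition. -/
noncomputable def matSqrt {m : Type*} [Fintype m] [DecidableEq m]
    (A : Matrix m m ℂ) : Matrix m m ℂ :=
  mfun Real.sqrt A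

/-- Real power of a (positive semidefinite / positive definite) matrix via spectral
decomposition. -/
noncomputable def matRpow {m : Type*} [Fintype m] [DecidableEq m]
    (t : ℝ) (A : Matrix m m ℂ) : Matrix m m ℂ :=
  mfun (fun u => u ^ t) A

/-- The von Neumann entropy `S(ρ) = -Tr(ρ log ρ)`. -/
noncomputable def vnEntropy {m : Type*} [Fintype m] [DecidableEq m]
    (ρ : Matrix m m ℂ) : ℝ :=
  -(Matrix.trace (ρ * matLog ρ)).re

/-- The quantum relative entropy `H(ρ, γ) = Tr(ρ (log ρ - log γ))`. -/
noncomputable def relEntropy {m : Type*} [Fintype m] [DecidableEq m]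
    (ρ γ : Matrix m m ℂ) : ℝ :=
  (Matrix.trace (ρ * (matLog ρ - matLog γ))).re

/-- The trace norm of a Hermitian matrix: the sum of the absolute values of its
eigenvalues. -/
noncomputable def traceNorm {m : Type*} [Fintype m] [DecidableEq m]
    (A : Matrix m m ℂ) : ℝ :=
  if hA : A.IsHermitian then ∑ i, |hA.eigenvalues i| else 0

/-- A density matrix: positive semidefinite with trace 1. -/
def IsDensity {m : Type*} [Fintype m] [DecidableEq m] (ρ : Matrix m m ℂ) : Prop :=
  ρ.PosSemidef ∧ Matrix.trace ρ = 1

/-- The binary entropy `h(x) = -x log x - (1-x) log (1-x)`. -/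
noncomputable def binEntropy (x : ℝ) : ℝ :=
  -(x * Real.log x) - (1 - x) * Real.log (1 - x)

/-- The Renyi relative entropy `H_a(ρ,γ) = (a-1)⁻¹ log Tr(ρ^a γ^(1-a))`. -/
noncomputable def renyiRel {m : Type*} [Fintype m] [DecidableEq m]
    (a : ℝ) (ρ γ : Matrix m m ℂ) : ℝ :=
  (a - 1)⁻¹ * Real.log (Matrix.trace (matRpow a ρ * matRpow (1 - a) γ)).re

/-- The sandwiched Renyi relative entropy
`H̃_a(ρ,γ) = (a-1)⁻¹ log Tr((γ^((1-a)/(2a)) ρ γ^((1-a)/(2a)))^a)`. -/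
noncomputable def sandRenyiRel {m : Type*} [Fintype m] [DecidableEq m]
    (a : ℝ) (ρ γ : Matrix m m ℂ) : ℝ :=
  (a - 1)⁻¹ * Real.log
    (Matrix.trace (matRpow a
      (matRpow ((1 - a) / (2 * a)) γ * ρ * matRpow ((1 - a) / (2 * a)) γ))).re

/-!
Expanding `0 ≤ Tr (√ρ - √σ)²` gives `Tr (√ρ √σ) ≤ (Tr ρ + Tr σ) / 2`, which is `1` for density
matrices, and `0 ≤ Tr (√ρ √σ)` because both factors are positive semidefinite. For a fixed density
matrix `σ`, these bounds on the linear functional `M ↦ Tr (M √σ)` pass from the square roots of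
density matrices to their convex combinations. The mixture `ρ_Av` is one such `σ`.
-/

open scoped MatrixOrder

section TraceInequalities

variable {m n R 𝕜 : Type*} [Fintype m] [Fintype n]

lemma trace_conjTranspose_mul_add_trace_conjTranspose_mul_le [Ring R] [PartialOrder R] [StarRing R]
    [StarOrderedRing R] (A B : Matrix m n R) :
    (Aᴴ * B).trace + (Bᴴ * A).trace ≤ (Aᴴ * A).trace + (Bᴴ * B).trace := by
  have expand : ((A - B)ᴴ * (A - B)).trace =
      (Aᴴ * A).trace + (Bᴴ * B).trace - ((Aᴴ * B).trace + (Bᴴ * A).trace) := by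
    simp only [conjTranspose_sub, Matrix.sub_mul, Matrix.mul_sub, trace_sub]
    abel
  exact sub_nonneg.mp (expand ▸ (posSemidef_conjTranspose_mul_self (A - B)).trace_nonneg)

lemma trace_mul_nonneg [RCLike 𝕜] {A B : Matrix n n 𝕜} (hA : A.PosSemidef)
    (hB : B.PosSemidef) : 0 ≤ (A * B).trace := by
  classical
  obtain ⟨C, rfl⟩ := CStarAlgebra.nonneg_iff_eq_star_mul_self.mp hA.nonneg
  calc
    0 ≤ (C * B * Cᴴ).trace := (hB.mul_mul_conjTranspose_same C).trace_nonneg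
    _ = (star C * C * B).trace := by
      rw [trace_mul_comm, star_eq_conjTranspose, Matrix.mul_assoc]

end TraceInequalities

section MatrixSquareRoot

variable {m : Type*} [Fintype m] [DecidableEq m] {A B : Matrix m m ℂ}

lemma mfun_eq_cfc (f : ℝ → ℝ) (A : Matrix m m ℂ) : mfun f A = cfc f A := by
  by_cases hA : A.IsHermitian
  · rw [mfun, dif_pos hA, hA.cfc_eq]
  · rw [mfun, dif_neg hA]
    exact (cfc_apply_of_not_predicate A hA).symm

lemma posSemidef_matSqrt (A : Matrix m m ℂ) : (matSqrt A).PosSemidef := by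
  rw [matSqrt, mfun_eq_cfc]
  exact (cfc_nonneg fun t _ ↦ Real.sqrt_nonneg t).posSemidef

lemma matSqrt_eq_sqrt (hA : A.PosSemidef) : matSqrt A = CFC.sqrt A := by
  rw [matSqrt, mfun_eq_cfc, CFC.sqrt_eq_real_sqrt A hA.nonneg, cfcₙ_eq_cfc]

lemma matSqrt_mul_self (hA : A.PosSemidef) : matSqrt A * matSqrt A = A := by
  rw [matSqrt_eq_sqrt hA, CFC.sqrt_mul_sqrt_self A hA.nonneg]

lemma two_mul_trace_matSqrt_mul_matSqrt_le (hA : A.PosSemidef) (hB : B.PosSemidef) :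
    2 * (matSqrt A * matSqrt B).trace ≤ A.trace + B.trace := by
  have h := trace_conjTranspose_mul_add_trace_conjTranspose_mul_le (matSqrt A) (matSqrt B)
  rwa [(posSemidef_matSqrt A).isHermitian.eq, (posSemidef_matSqrt B).isHermitian.eq,
    matSqrt_mul_self hA, matSqrt_mul_self hB, trace_mul_comm (matSqrt B), ← two_mul] at h

end MatrixSquareRoot

section DensityMatrices

variable {m : Type*} [Fintype m] [DecidableEq m] {ρ σ M : Matrix m m ℂ}

lemma convex_setOf_isDensity : Convex ℝ {ρ : Matrix m m ℂ | IsDensity ρ} := by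
  intro ρ hρ σ hσ a b ha hb hab
  refine ⟨(hρ.1.smul ha).add (hσ.1.smul hb), ?_⟩
  rw [trace_add, trace_smul, trace_smul, hρ.2, hσ.2, ← add_smul, hab, one_smul]

lemma IsDensity.matSqrt_mem_convexHull (hρ : IsDensity ρ) :
    matSqrt ρ ∈ convexHull ℝ (matSqrt '' {ρ : Matrix m m ℂ | IsDensity ρ}) :=
  subset_convexHull ℝ _ ⟨ρ, hρ, rfl⟩

lemma IsDensity.trace_matSqrt_mul_matSqrt_mem_Icc (hρ : IsDensity ρ) (hσ : IsDensity σ) :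
    (matSqrt ρ * matSqrt σ).trace ∈ Set.Icc 0 1 := by
  refine ⟨trace_mul_nonneg (posSemidef_matSqrt ρ) (posSemidef_matSqrt σ), ?_⟩
  have h := two_mul_trace_matSqrt_mul_matSqrt_le hρ.1 hσ.1
  rw [hρ.2, hσ.2, one_add_one_eq_two] at h
  exact le_of_mul_le_mul_left (h.trans_eq (mul_one 2).symm) two_pos

lemma trace_mul_matSqrt_mem_Icc_of_mem_convexHull
    (hM : M ∈ convexHull ℝ (matSqrt '' {ρ | IsDensity ρ})) (hσ : IsDensity σ) :
    (M * matSqrt σ).trace ∈ Set.Icc 0 1 := by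
  let overlap : Matrix m m ℂ →ₗ[ℝ] ℂ :=
    traceLinearMap m ℝ ℂ ∘ₗ LinearMap.mulRight ℝ (matSqrt σ)
  suffices convexHull ℝ (matSqrt '' {ρ | IsDensity ρ}) ⊆ overlap ⁻¹' Set.Icc 0 1 from this hM
  refine convexHull_min ?_ ((convex_Icc 0 1).linear_preimage overlap)
  rintro _ ⟨ρ, hρ, rfl⟩
  exact hρ.trace_matSqrt_mul_matSqrt_mem_Icc hσ

theorem sqrt_trace_le_one_general
    (hM : M ∈ convexHull ℝ (matSqrt '' {ρ | IsDensity ρ})) (hσ : IsDensity σ) :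
    (M * matSqrt σ).trace.re ≤ 1 ∧ -2 * Real.log (M * matSqrt σ).trace.re ≥ 0 := by
  obtain ⟨hnonneg, hle⟩ := trace_mul_matSqrt_mem_Icc_of_mem_convexHull hM hσ
  have hre_le : (M * matSqrt σ).trace.re ≤ 1 := Complex.re_le_re hle
  have hlog : Real.log (M * matSqrt σ).trace.re ≤ 0 :=
    Real.log_nonpos (Complex.re_le_re hnonneg) hre_le
  exact ⟨hre_le, mul_nonneg_of_nonpos_of_nonpos (by norm_num) hlog⟩

end DensityMatrices

theorem sqrt_trace_le_one (n : ℕ) (hn : 1 ≤ n) (x : ℝ) (hx : x ∈ Set.Ioo (0:ℝ) 1)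
    (ρ₁ ρ₂ : Matrix (Fin n) (Fin n) ℂ) (h1 : IsDensity ρ₁) (h2 : IsDensity ρ₂) :
    (Matrix.trace ((x • matSqrt ρ₁ + (1 - x) • matSqrt ρ₂)
        * matSqrt (x • ρ₁ + (1 - x) • ρ₂))).re ≤ 1
    ∧ -2 * Real.log
        (Matrix.trace ((x • matSqrt ρ₁ + (1 - x) • matSqrt ρ₂)
          * matSqrt (x • ρ₁ + (1 - x) • ρ₂))).re ≥ 0 := by
  have hx' : 0 ≤ 1 - x := sub_nonneg.mpr hx.2.le
  exact sqrt_trace_le_one_general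
    (convex_convexHull ℝ _ h1.matSqrt_mem_convexHull h2.matSqrt_mem_convexHull
      hx.1.le hx' (add_sub_cancel x 1))
    (convex_setOf_isDensity h1 h2 hx.1.le hx' (add_sub_cancel x 1))
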